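/- The matrix-completion objective f has a Nash equilibrium: there exist U₀ ∈ ℝ^{m×r} and V₀ ∈ ℝ^{r×n} such that f(U₀,V₀) ≤ f(U,V₀) for every U ∈ ℝ^{m×r} and f(U₀,V₀) ≤ f(U₀,V) for every V ∈ ℝ^{r×n}. -/

import Mathlib

open Finset Matrix

/-- Squared Frobenius norm: `frobSq X = ‖X‖_F²`. -/
noncomputable def frobSq {a b : ℕ} (X : Matrix (Fin a) (Fin b) ℝ) : ℝ :=
  ∑ i, ∑ j, (X i j) ^ 2

/-- The matrix-completion objective
`f(U,V) = (1/2)(‖U‖_F² + ‖V‖_F²) + (μ/2) ∑_{(i,j)∈Ω} ((UV − M)_{ij})² + (ν/2) ‖L(UV) − b‖²`. -/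
noncomputable def objF {m n r p : ℕ} (Ω : Finset (Fin m × Fin n)) (M : Matrix (Fin m) (Fin n) ℝ)
    (L : Matrix (Fin m) (Fin n) ℝ →ₗ[ℝ] EuclideanSpace ℝ (Fin p))
    (b : EuclideanSpace ℝ (Fin p)) (μ ν : ℝ)
    (U : Matrix (Fin m) (Fin r) ℝ) (V : Matrix (Fin r) (Fin n) ℝ) : ℝ :=
  (1 / 2) * (frobSq U + frobSq V)
    + (μ / 2) * ∑ ij ∈ Ω, ((U * V - M) ij.1 ij.2) ^ 2
    + (ν / 2) * ‖L (U * V) - b‖ ^ 2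

lemma frobSq_nonneg' {a b : ℕ} (X : Matrix (Fin a) (Fin b) ℝ) : 0 ≤ frobSq X :=
  Finset.sum_nonneg fun _ _ => Finset.sum_nonneg fun _ _ => sq_nonneg _

lemma sq_le_frobSq {a b : ℕ} (X : Matrix (Fin a) (Fin b) ℝ) (i : Fin a) (j : Fin b) :
    (X i j) ^ 2 ≤ frobSq X := by
  have h1 : (X i j) ^ 2 ≤ ∑ j, (X i j) ^ 2 :=
    Finset.single_le_sum (f := fun j => (X i j) ^ 2) (fun _ _ => sq_nonneg _) (Finset.mem_univ j)
  have h2 : ∑ j, (X i j) ^ 2 ≤ frobSq X :=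
    Finset.single_le_sum (f := fun i => ∑ j, (X i j) ^ 2)
      (fun _ _ => Finset.sum_nonneg fun _ _ => sq_nonneg _) (Finset.mem_univ i)
  exact h1.trans h2

/-- Matrices with all entries in `[-R, R]`. -/
def boxSet (a b : ℕ) (R : ℝ) : Set (Matrix (Fin a) (Fin b) ℝ) :=
  Set.pi Set.univ fun _ => Set.pi Set.univ fun _ => Set.Icc (-R) R

lemma isCompact_boxSet (a b : ℕ) (R : ℝ) : IsCompact (boxSet a b R) :=
  isCompact_univ_pi fun _ => isCompact_univ_pi fun _ => isCompact_Icc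

lemma mem_boxSet_of_frobSq_le {a b : ℕ} {c : ℝ} (hc : 0 ≤ c) (X : Matrix (Fin a) (Fin b) ℝ)
    (h : frobSq X ≤ 2 * c) : X ∈ boxSet a b (2 * c + 1) := by
  intro i _ j _
  have := (sq_le_frobSq X i j).trans h
  exact Set.mem_Icc.2 (abs_le.1 (abs_le_of_sq_le_sq (by nlinarith) (by linarith)))

lemma continuous_frobSq {a b : ℕ} :
    Continuous (frobSq : Matrix (Fin a) (Fin b) ℝ → ℝ) := by
  unfold frobSq
  refine continuous_finsetSum _ fun i _ => continuous_finsetSum _ fun j _ => ?_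
  exact (continuous_id.matrix_elem i j).pow 2

/-- The objective has a Nash equilibrium. -/
theorem objF_exists_nash {m n r p : ℕ} (Ω : Finset (Fin m × Fin n)) (M : Matrix (Fin m) (Fin n) ℝ)
    (L : Matrix (Fin m) (Fin n) ℝ →ₗ[ℝ] EuclideanSpace ℝ (Fin p))
    (b : EuclideanSpace ℝ (Fin p)) (μ ν : ℝ) (hμ : 0 < μ) (hν : 0 < ν) :
    ∃ (U₀ : Matrix (Fin m) (Fin r) ℝ) (V₀ : Matrix (Fin r) (Fin n) ℝ),
      (∀ U : Matrix (Fin m) (Fin r) ℝ, objF Ω M L b μ ν U₀ V₀ ≤ objF Ω M L b μ ν U V₀) ∧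
        (∀ V : Matrix (Fin r) (Fin n) ℝ, objF Ω M L b μ ν U₀ V₀ ≤ objF Ω M L b μ ν U₀ V) := by
  have hlow : ∀ (U : Matrix (Fin m) (Fin r) ℝ) (V : Matrix (Fin r) (Fin n) ℝ),
      frobSq U + frobSq V ≤ 2 * objF Ω M L b μ ν U V := by
    intro U V
    have h1 : 0 ≤ (μ / 2) * ∑ ij ∈ Ω, ((U * V - M) ij.1 ij.2) ^ 2 :=
      mul_nonneg (by linarith) (Finset.sum_nonneg fun _ _ => sq_nonneg _)
    have h2 : 0 ≤ (ν / 2) * ‖L (U * V) - b‖ ^ 2 := by positivity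
    unfold objF
    linarith
  have hL : Continuous L := L.continuous_of_finiteDimensional
  have hcont : Continuous fun x : Matrix (Fin m) (Fin r) ℝ × Matrix (Fin r) (Fin n) ℝ =>
      objF Ω M L b μ ν x.1 x.2 := by
    have hm : Continuous fun x : Matrix (Fin m) (Fin r) ℝ × Matrix (Fin r) (Fin n) ℝ =>
      x.1 * x.2 := continuous_fst.matrix_mul continuous_snd
    unfold objF
    refine ((continuous_const.mul ((continuous_frobSq.comp continuous_fst).add
      (continuous_frobSq.comp continuous_snd))).add (continuous_const.mul ?_)).add
      (continuous_const.mul (((hL.comp hm).sub continuous_const).norm.pow 2))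
    exact continuous_finsetSum _ fun ij _ =>
      ((hm.sub continuous_const).matrix_elem ij.1 ij.2).pow 2
  set c := objF Ω M L b μ ν (0 : Matrix (Fin m) (Fin r) ℝ) 0 with hcdef
  have hc : 0 ≤ c := by
    have := hlow 0 0
    have := frobSq_nonneg' (0 : Matrix (Fin m) (Fin r) ℝ)
    have := frobSq_nonneg' (0 : Matrix (Fin r) (Fin n) ℝ)
    linarith
  have hK := (isCompact_boxSet m r (2 * c + 1)).prod (isCompact_boxSet r n (2 * c + 1))
  have hmem : ∀ (U : Matrix (Fin m) (Fin r) ℝ) (V : Matrix (Fin r) (Fin n) ℝ),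
      objF Ω M L b μ ν U V ≤ c →
      (U, V) ∈ boxSet m r (2 * c + 1) ×ˢ boxSet r n (2 * c + 1) := by
    intro U V h
    have h1 := hlow U V
    have h2 := frobSq_nonneg' U
    have h3 := frobSq_nonneg' V
    exact ⟨mem_boxSet_of_frobSq_le hc U (by linarith), mem_boxSet_of_frobSq_le hc V (by linarith)⟩
  have h0 := hmem 0 0 le_rfl
  obtain ⟨⟨U₀, V₀⟩, -, hmin⟩ := hK.exists_isMinOn ⟨_, h0⟩ hcont.continuousOn
  have hmin' : ∀ x ∈ boxSet m r (2 * c + 1) ×ˢ boxSet r n (2 * c + 1),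
      objF Ω M L b μ ν U₀ V₀ ≤ objF Ω M L b μ ν x.1 x.2 := fun x hx => hmin hx
  have hglob : ∀ (U : Matrix (Fin m) (Fin r) ℝ) (V : Matrix (Fin r) (Fin n) ℝ),
      objF Ω M L b μ ν U₀ V₀ ≤ objF Ω M L b μ ν U V := by
    intro U V
    rcases le_total (objF Ω M L b μ ν U V) c with h | h
    · exact hmin' (U, V) (hmem U V h)
    · exact le_trans (hmin' (0, 0) h0) h
  exact ⟨U₀, V₀, fun U => hglob U V₀, fun V => hglob U₀ V⟩
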